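/- Let q ≥ 0 with q not of the form k + 1/2 for a nonnegative integer k, let η ∈ ℝ be fixed, and let 0 < c < 1. Define F_q^{(1)}(η,β) = (1/(2π)) ∫_{-∞}^∞ e^{η(c+it)} (π(c+it)/sin(π(c+it))) M(q+1; q+5/2; 2(c+it)/β) /(c+it) dt, coefficients c_k = 2^k (q+1)_k/(k! (q+5/2)_k), and Φ_k^{(1)}(η) = (1/2) ∫_{-∞}^∞ e^{η(c+it)} (c+it)^k / sin(π(c+it)) dt. Then for every integer N ≥ 1, as β → +∞, F_q^{(1)}(η,β) − Σ_{k=0}^{N−1} c_k β^{−k} Φ_k^{(1)}(η) = O(β^{−N}). -/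

import Mathlib

/-!
The coefficients `a_k = (a)_k / ((b)_k k!)` of Kummer's function satisfy `|a_k| ≤ R ^ k / k!` for
some `R`, because `(a + k) / (b + k)` is bounded in `k`. Hence the `N`-th Taylor remainder of
`M(a;b;z)` is at most `(R|z|) ^ N / N! * exp (R|z|)`. On the contour `s = c + it` the kernel
`e^{ηs} / sin(πs)` decays like `exp (-π|t|)`, so it is integrable against `exp (r|s|)` for every
`r < π`. With `z = εs` and `ε = 2/β` small, the exponential factor of the remainder is absorbed by
this decay, and integrating the remainder over the contour leaves `O(ε ^ N)`.
-/

open Real MeasureTheory Set Finset Filter Asymptotics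

/-- Kummer's confluent hypergeometric function `M(a;b;z)` as a power series. -/
noncomputable def kummerM (a b z : ℂ) : ℂ :=
  ∑' k : ℕ, (ascPochhammer ℂ k).eval a /
      ((ascPochhammer ℂ k).eval b * (k.factorial : ℂ)) * z ^ k

/-- The function `F_q^{(1)}(η,β)`. -/
noncomputable def F1 (q c η β : ℝ) : ℂ :=
  (1 / (2 * (π : ℂ))) * ∫ t : ℝ,
    Complex.exp ((η : ℂ) * ((c : ℂ) + t * Complex.I)) *
      ((π : ℂ) * ((c : ℂ) + t * Complex.I) /
        Complex.sin ((π : ℂ) * ((c : ℂ) + t * Complex.I))) *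
      kummerM ((q : ℂ) + 1) ((q : ℂ) + 5 / 2)
        (2 * ((c : ℂ) + t * Complex.I) / (β : ℂ)) / ((c : ℂ) + t * Complex.I)

/-- The coefficients `c_k = 2^k (q+1)_k/(k! (q+5/2)_k)`. -/
noncomputable def ccoef (q : ℝ) (k : ℕ) : ℝ :=
  2 ^ k * (ascPochhammer ℝ k).eval (q + 1) /
    (k.factorial * (ascPochhammer ℝ k).eval (q + 5 / 2))

/-- The auxiliary function `Φ_k^{(1)}(η)`. -/
noncomputable def Phi1 (c : ℝ) (k : ℕ) (η : ℝ) : ℂ :=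
  (1 / 2 : ℂ) * ∫ t : ℝ, Complex.exp ((η : ℂ) * ((c : ℂ) + t * Complex.I)) *
      ((c : ℂ) + t * Complex.I) ^ k / Complex.sin ((π : ℂ) * ((c : ℂ) + t * Complex.I))

open scoped Topology

section ExponentialType

variable {𝕜 : Type*} [RCLike 𝕜] {a : ℕ → 𝕜} {C R : ℝ}

variable {α : Type*} [MeasurableSpace α] {μ : Measure α} {g s : α → 𝕜} {r : ℝ}

lemma integrable_mul_pow_of_exp (hg : AEStronglyMeasurable g μ) (hs : AEStronglyMeasurable s μ)
    (hr : 0 < r) (hgs : Integrable (fun x => Real.exp (r * ‖s x‖) * ‖g x‖) μ) (k : ℕ) :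
    Integrable (fun x => g x * s x ^ k) μ := by
  refine (hgs.const_mul (k.factorial / r ^ k)).mono' (hg.mul (hs.pow k)) (ae_of_all _ fun x => ?_)
  calc ‖g x * s x ^ k‖ =
        k.factorial / r ^ k * ((r * ‖s x‖) ^ k / k.factorial * ‖g x‖) := by
        rw [norm_mul, norm_pow, mul_pow]
        field_simp
    _ ≤ k.factorial / r ^ k * (Real.exp (r * ‖s x‖) * ‖g x‖) := by
      gcongr
      exact Real.pow_div_factorial_le_exp _ (by positivity) k

/-- Entire functions `∑ a k * z ^ k` of exponential type, expressed by a factorial bound on the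
coefficients. The constants `C` and `R` are explicit because the type `R` decides which rescalings
`z ↦ ε * z` stay integrable against a given weight. -/
structure HasExpType (a : ℕ → 𝕜) (C R : ℝ) : Prop where
  type_nonneg : 0 ≤ R
  norm_le : ∀ k, ‖a k‖ ≤ C * (R ^ k / k.factorial)

namespace HasExpType

lemma const_nonneg (ha : HasExpType a C R) : 0 ≤ C :=
  (norm_nonneg _).trans (by simpa using ha.norm_le 0)

lemma norm_mul_pow_add_le (ha : HasExpType a C R) (z : 𝕜) (N k : ℕ) :
    ‖a (k + N) * z ^ (k + N)‖ ≤
      C * ((R * ‖z‖) ^ N / N.factorial) * ((R * ‖z‖) ^ k / k.factorial) := by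
  have hC := ha.const_nonneg
  have hR := ha.type_nonneg
  have hfact : (k.factorial : ℝ) * N.factorial ≤ (k + N).factorial := by
    exact_mod_cast Nat.le_of_dvd (Nat.factorial_pos _)
      (Nat.factorial_mul_factorial_dvd_factorial_add k N)
  calc ‖a (k + N) * z ^ (k + N)‖ = ‖a (k + N)‖ * ‖z‖ ^ (k + N) := by rw [norm_mul, norm_pow]
    _ ≤ C * (R ^ (k + N) / (k + N).factorial) * ‖z‖ ^ (k + N) := by gcongr; exact ha.norm_le _
    _ ≤ C * (R ^ (k + N) / (k.factorial * N.factorial)) * ‖z‖ ^ (k + N) := by gcongr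
    _ = C * ((R * ‖z‖) ^ N / N.factorial) * ((R * ‖z‖) ^ k / k.factorial) := by
      field_simp
      ring

lemma summable (ha : HasExpType a C R) (z : 𝕜) : Summable fun k => a k * z ^ k :=
  .of_norm_bounded ((Real.summable_pow_div_factorial (R * ‖z‖)).mul_left C) fun k => by
    simpa using ha.norm_mul_pow_add_le z 0 k

lemma norm_tsum_sub_sum_range_le (ha : HasExpType a C R) (z : 𝕜) (N : ℕ) :
    ‖∑' k, a k * z ^ k - ∑ k ∈ Finset.range N, a k * z ^ k‖ ≤
      C * ((R * ‖z‖) ^ N / N.factorial) * Real.exp (R * ‖z‖) := by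
  rw [← (ha.summable z).sum_add_tsum_nat_add N, add_sub_cancel_left, Real.exp_eq_exp_ℝ]
  exact tsum_of_norm_bounded ((NormedSpace.expSeries_div_hasSum_exp (R * ‖z‖)).mul_left _)
    (ha.norm_mul_pow_add_le z N)

lemma norm_tsum_le (ha : HasExpType a C R) (z : 𝕜) :
    ‖∑' k, a k * z ^ k‖ ≤ C * Real.exp (R * ‖z‖) := by
  simpa using ha.norm_tsum_sub_sum_range_le z 0

lemma measurable_tsum (ha : HasExpType a C R) : Measurable fun z => ∑' k, a k * z ^ k :=
  measurable_of_tendsto_metrizable (f := fun n z => ∑ k ∈ Finset.range n, a k * z ^ k)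
    (fun n => by fun_prop)
    (tendsto_pi_nhds.mpr fun z => (ha.summable z).hasSum.tendsto_sum_nat)

lemma norm_tsum_mul_sub_sum_range_le_exp (ha : HasExpType a C R) {r : ℝ} (hr : 0 < r) {ε : 𝕜}
    (hε : R * ‖ε‖ ≤ r / 2) (w : 𝕜) (N : ℕ) :
    ‖∑' k, a k * (ε * w) ^ k - ∑ k ∈ Finset.range N, a k * (ε * w) ^ k‖ ≤
      C * (2 * R / r) ^ N * ‖ε‖ ^ N * Real.exp (r * ‖w‖) := by
  have hC := ha.const_nonneg
  have hR := ha.type_nonneg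
  have hexp : Real.exp (R * ‖ε * w‖) ≤ Real.exp (r / 2 * ‖w‖) := by
    rw [norm_mul, ← mul_assoc]
    gcongr
  calc _ ≤ C * ((R * ‖ε * w‖) ^ N / N.factorial) * Real.exp (R * ‖ε * w‖) :=
        ha.norm_tsum_sub_sum_range_le _ N
    _ = C * (2 * R / r) ^ N * ‖ε‖ ^ N * ((r / 2 * ‖w‖) ^ N / N.factorial) *
          Real.exp (R * ‖ε * w‖) := by
      simp only [norm_mul, mul_pow, div_pow]
      field_simp
    _ ≤ C * (2 * R / r) ^ N * ‖ε‖ ^ N * Real.exp (r / 2 * ‖w‖) * Real.exp (r / 2 * ‖w‖) := by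
      gcongr
      exact Real.pow_div_factorial_le_exp _ (by positivity) N
    _ = C * (2 * R / r) ^ N * ‖ε‖ ^ N * Real.exp (r * ‖w‖) := by
      rw [mul_assoc _ (Real.exp _), ← Real.exp_add]
      ring_nf

lemma integrable_mul_tsum (ha : HasExpType a C R)
    (hg : AEStronglyMeasurable g μ) (hs : AEStronglyMeasurable s μ)
    (hgs : Integrable (fun x => Real.exp (r * ‖s x‖) * ‖g x‖) μ) {ε : 𝕜} (hε : R * ‖ε‖ ≤ r) :
    Integrable (fun x => g x * ∑' k, a k * (ε * s x) ^ k) μ := by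
  have hC := ha.const_nonneg
  refine (hgs.const_mul C).mono' (hg.mul ?_) (ae_of_all _ fun x => ?_)
  · exact (ha.measurable_tsum.comp_aemeasurable
      (hs.aemeasurable.const_mul ε)).aestronglyMeasurable
  · calc ‖g x * ∑' k, a k * (ε * s x) ^ k‖ ≤ ‖g x‖ * (C * Real.exp (R * ‖ε * s x‖)) := by
          rw [norm_mul]
          gcongr
          exact ha.norm_tsum_le _
      _ ≤ ‖g x‖ * (C * Real.exp (r * ‖s x‖)) := by
          rw [norm_mul, ← mul_assoc R]
          gcongr
      _ = C * (Real.exp (r * ‖s x‖) * ‖g x‖) := by ring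

lemma integral_mul_tsum_sub_sum_range_mul_integral (ha : HasExpType a C R)
    (hg : AEStronglyMeasurable g μ) (hs : AEStronglyMeasurable s μ) (hr : 0 < r)
    (hgs : Integrable (fun x => Real.exp (r * ‖s x‖) * ‖g x‖) μ) {ε : 𝕜} (hε : R * ‖ε‖ ≤ r)
    (N : ℕ) :
    ∫ x, g x * ∑' k, a k * (ε * s x) ^ k ∂μ -
        ∑ k ∈ Finset.range N, a k * ε ^ k * ∫ x, g x * s x ^ k ∂μ =
      ∫ x, g x * (∑' k, a k * (ε * s x) ^ k -
        ∑ k ∈ Finset.range N, a k * (ε * s x) ^ k) ∂μ := by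
  have hterm (k : ℕ) : Integrable (fun x => a k * ε ^ k * (g x * s x ^ k)) μ :=
    (integrable_mul_pow_of_exp hg hs hr hgs k).const_mul _
  simp_rw [← integral_const_mul]
  rw [← integral_finsetSum _ fun k _ => hterm k,
    ← integral_sub (ha.integrable_mul_tsum hg hs hgs hε)
      (integrable_finsetSum _ fun k _ => hterm k)]
  congr with x
  rw [mul_sub, Finset.mul_sum]
  congr 1
  exact Finset.sum_congr rfl fun k _ => by ring

theorem isBigO_integral_mul_tsum_sub_sum_range (ha : HasExpType a C R)
    (hg : AEStronglyMeasurable g μ) (hs : AEStronglyMeasurable s μ) (hr : 0 < r)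
    (hgs : Integrable (fun x => Real.exp (r * ‖s x‖) * ‖g x‖) μ) (N : ℕ) :
    (fun ε : 𝕜 => ∫ x, g x * ∑' k, a k * (ε * s x) ^ k ∂μ -
        ∑ k ∈ Finset.range N, a k * ε ^ k * ∫ x, g x * s x ^ k ∂μ) =O[𝓝 0] fun ε => ε ^ N := by
  have hsmall : ∀ᶠ ε : 𝕜 in 𝓝 0, R * ‖ε‖ ≤ r / 2 := by
    have : Tendsto (fun ε : 𝕜 => R * ‖ε‖) (𝓝 0) (𝓝 0) := by
      simpa using (tendsto_norm_zero (E := 𝕜)).const_mul R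
    exact this.eventually_le_const (half_pos hr)
  refine .of_bound (C * (2 * R / r) ^ N * ∫ x, Real.exp (r * ‖s x‖) * ‖g x‖ ∂μ) ?_
  filter_upwards [hsmall] with ε hε
  rw [ha.integral_mul_tsum_sub_sum_range_mul_integral hg hs hr hgs (by linarith) N]
  calc _ ≤ ∫ x, C * (2 * R / r) ^ N * ‖ε‖ ^ N * (Real.exp (r * ‖s x‖) * ‖g x‖) ∂μ := by
        refine norm_integral_le_of_norm_le (hgs.const_mul _) (ae_of_all _ fun x => ?_)
        rw [norm_mul, ← mul_assoc, mul_comm ‖g x‖]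
        gcongr
        exact ha.norm_tsum_mul_sub_sum_range_le_exp hr hε _ N
    _ = C * (2 * R / r) ^ N * (∫ x, Real.exp (r * ‖s x‖) * ‖g x‖ ∂μ) * ‖ε ^ N‖ := by
      rw [integral_const_mul, norm_pow]
      ring

end HasExpType

end ExponentialType

lemma exists_norm_add_natCast_le_mul {𝕜 : Type*} [RCLike 𝕜] (a : 𝕜) {b : 𝕜}
    (hb : ∀ k : ℕ, b ≠ -k) : ∃ R, 0 ≤ R ∧ ∀ k : ℕ, ‖a + k‖ ≤ R * ‖b + k‖ := by
  have hlim : Tendsto (fun k : ℕ => (a + k) / (b + k)) atTop (𝓝 1) := by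
    simpa using tendsto_add_mul_div_add_mul_atTop_nhds a b (1 : 𝕜) one_ne_zero
  obtain ⟨R, hRpos, hR⟩ := (Metric.isBounded_range_of_tendsto _ hlim).exists_pos_norm_le
  refine ⟨R, hRpos.le, fun k => ?_⟩
  have hbk : 0 < ‖b + k‖ := norm_pos_iff.mpr fun h => hb k (eq_neg_of_add_eq_zero_left h)
  rw [← div_le_iff₀ hbk, ← norm_div]
  exact hR _ (mem_range_self k)

lemma exists_norm_ascPochhammer_eval_le {𝕜 : Type*} [RCLike 𝕜] (a : 𝕜) {b : 𝕜}
    (hb : ∀ k : ℕ, b ≠ -k) :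
    ∃ R, 0 ≤ R ∧ ∀ k : ℕ,
      ‖(ascPochhammer 𝕜 k).eval a‖ ≤ R ^ k * ‖(ascPochhammer 𝕜 k).eval b‖ := by
  obtain ⟨R, hR, hab⟩ := exists_norm_add_natCast_le_mul a hb
  refine ⟨R, hR, fun k => ?_⟩
  induction k with
  | zero => simp
  | succ k ih =>
    rw [ascPochhammer_succ_eval, ascPochhammer_succ_eval, norm_mul, norm_mul]
    calc _ ≤ R ^ k * ‖(ascPochhammer 𝕜 k).eval b‖ * (R * ‖b + k‖) := by
          gcongr
          exact hab k
      _ = R ^ (k + 1) * (‖(ascPochhammer 𝕜 k).eval b‖ * ‖b + k‖) := by ring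

/-- The Taylor coefficient `(a)_k / ((b)_k k!)` of Kummer's function `M(a;b;·)` at the origin. -/
noncomputable def kummerCoeff (a b : ℂ) (k : ℕ) : ℂ :=
  (ascPochhammer ℂ k).eval a / ((ascPochhammer ℂ k).eval b * (k.factorial : ℂ))

lemma kummerM_eq_tsum_kummerCoeff (a b z : ℂ) :
    kummerM a b z = ∑' k, kummerCoeff a b k * z ^ k := rfl

lemma exists_hasExpType_kummerCoeff (a : ℂ) {b : ℂ} (hb : ∀ k : ℕ, b ≠ -k) :
    ∃ R, HasExpType (kummerCoeff a b) 1 R := by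
  obtain ⟨R, hR, hab⟩ := exists_norm_ascPochhammer_eval_le a hb
  refine ⟨R, hR, fun k => ?_⟩
  rw [one_mul, kummerCoeff, ← div_div, norm_div, norm_div, Complex.norm_natCast]
  gcongr
  exact div_le_of_le_mul₀ (norm_nonneg _) (by positivity) (hab k)

lemma ofReal_ascPochhammer_eval (x : ℝ) (k : ℕ) :
    (((ascPochhammer ℝ k).eval x : ℝ) : ℂ) = (ascPochhammer ℂ k).eval (x : ℂ) := by
  rw [← ascPochhammer_map Complex.ofRealHom k]
  exact (Polynomial.eval_map_apply (f := Complex.ofRealHom) (p := ascPochhammer ℝ k) x).symm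

lemma ofReal_ccoef (q : ℝ) (k : ℕ) :
    (ccoef q k : ℂ) = 2 ^ k * kummerCoeff (q + 1) (q + 5 / 2) k := by
  simp only [ccoef, kummerCoeff, Complex.ofReal_div, Complex.ofReal_mul,
    ofReal_ascPochhammer_eval]
  push_cast
  ring

/-- The factor `e^{ηs} / sin(πs)` shared by the integrands of `F_q^{(1)}` and `Φ_k^{(1)}`. -/
noncomputable def expDivSin (η : ℝ) (s : ℂ) : ℂ :=
  Complex.exp (η * s) / Complex.sin (π * s)

lemma measurable_expDivSin (η : ℝ) : Measurable (expDivSin η) := by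
  unfold expDivSin
  fun_prop

lemma abs_sin_mul_cosh_le_norm_sin (x y : ℝ) :
    |Real.sin x| * Real.cosh y ≤ ‖Complex.sin (x + y * Complex.I)‖ := by
  have hre : (Complex.sin (x + y * Complex.I)).re = Real.sin x * Real.cosh y := by
    rw [Complex.sin_add_mul_I]
    simp [← Complex.ofReal_sin, ← Complex.ofReal_cos, ← Complex.ofReal_cosh, ← Complex.ofReal_sinh]
  rw [← abs_of_pos (Real.cosh_pos y), ← abs_mul, ← hre]
  exact Complex.abs_re_le_norm _

lemma norm_expDivSin_le {c : ℝ} (hc : ∀ n : ℤ, c ≠ n) (η t : ℝ) :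
    ‖expDivSin η (c + t * Complex.I)‖ ≤
      2 * Real.exp (η * c) / |Real.sin (π * c)| * Real.exp (-(π * |t|)) := by
  have hsin : 0 < |Real.sin (π * c)| := by
    refine abs_pos.mpr fun h => ?_
    obtain ⟨n, hn⟩ := Real.sin_eq_zero_iff.mp h
    exact hc n (mul_left_cancel₀ Real.pi_ne_zero (by linarith))
  have hcosh : Real.exp (π * |t|) / 2 ≤ Real.cosh (π * t) := by
    rw [← Real.cosh_abs, abs_mul, abs_of_pos Real.pi_pos, Real.cosh_eq]
    linarith [Real.exp_pos (-(π * |t|))]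
  have hden : |Real.sin (π * c)| * (Real.exp (π * |t|) / 2) ≤
      ‖Complex.sin (π * (c + t * Complex.I))‖ := by
    refine (mul_le_mul_of_nonneg_left hcosh hsin.le).trans ?_
    have hsplit : (π : ℂ) * (c + t * Complex.I) = (π * c : ℝ) + (π * t : ℝ) * Complex.I := by
      push_cast
      ring
    rw [hsplit]
    exact abs_sin_mul_cosh_le_norm_sin _ _
  have hnum : ‖Complex.exp (η * (c + t * Complex.I))‖ = Real.exp (η * c) := by
    simp [Complex.norm_exp]
  rw [expDivSin, norm_div, hnum, Real.exp_neg]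
  calc _ ≤ Real.exp (η * c) / (|Real.sin (π * c)| * (Real.exp (π * |t|) / 2)) := by gcongr
    _ = 2 * Real.exp (η * c) / |Real.sin (π * c)| * (Real.exp (π * |t|))⁻¹ := by field_simp

lemma integrable_exp_neg_mul_abs {b : ℝ} (hb : 0 < b) :
    Integrable fun t : ℝ => Real.exp (-(b * |t|)) := by
  have hIic : IntegrableOn (fun t : ℝ => Real.exp (-(b * |t|))) (Iic 0) :=
    (integrableOn_exp_mul_Iic hb 0).congr_fun
      (fun t ht => by simp [abs_of_nonpos (mem_Iic.mp ht)]) measurableSet_Iic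
  have hIoi : IntegrableOn (fun t : ℝ => Real.exp (-(b * |t|))) (Ioi 0) :=
    (integrableOn_exp_mul_Ioi (neg_lt_zero.mpr hb) 0).congr_fun
      (fun t ht => by simp [abs_of_pos (mem_Ioi.mp ht)]) measurableSet_Ioi
  simpa using hIic.union hIoi

lemma integrable_exp_norm_mul_norm_expDivSin {c : ℝ} (hc : ∀ n : ℤ, c ≠ n) (η : ℝ) {r : ℝ}
    (hr : 0 ≤ r) (hrπ : r < π) :
    Integrable fun t : ℝ => Real.exp (r * ‖(c : ℂ) + t * Complex.I‖) *
      ‖expDivSin η (c + t * Complex.I)‖ := by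
  refine ((integrable_exp_neg_mul_abs (sub_pos.mpr hrπ)).const_mul
    (Real.exp (r * |c|) * (2 * Real.exp (η * c) / |Real.sin (π * c)|))).mono'
    ?_ (ae_of_all _ fun t => ?_)
  · have := measurable_expDivSin η
    exact Measurable.aestronglyMeasurable (by fun_prop)
  · have hs : ‖(c : ℂ) + t * Complex.I‖ ≤ |c| + |t| := by
      simpa using norm_add_le (c : ℂ) (t * Complex.I)
    rw [Real.norm_of_nonneg (by positivity)]
    calc _ ≤ Real.exp (r * (|c| + |t|)) *
          (2 * Real.exp (η * c) / |Real.sin (π * c)| * Real.exp (-(π * |t|))) := by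
          gcongr
          exact norm_expDivSin_le hc η t
      _ = Real.exp (r * |c|) * (2 * Real.exp (η * c) / |Real.sin (π * c)|) *
          Real.exp (-((π - r) * |t|)) := by
          rw [show -((π - r) * |t|) = r * |t| + -(π * |t|) by ring, mul_add, Real.exp_add,
            Real.exp_add]
          ring

lemma F1_eq_integral_expDivSin (q η β : ℝ) {c : ℝ} (hc : c ≠ 0) :
    F1 q c η β = 1 / 2 * ∫ t : ℝ, expDivSin η (c + t * Complex.I) *
      kummerM (q + 1) (q + 5 / 2) (2 / β * (c + t * Complex.I)) := by
  have hs (t : ℝ) : (c : ℂ) + t * Complex.I ≠ 0 := fun h =>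
    hc (by simpa using congrArg Complex.re h)
  have hπ : (π : ℂ) ≠ 0 := Complex.ofReal_ne_zero.mpr Real.pi_ne_zero
  rw [F1, ← integral_const_mul, ← integral_const_mul]
  congr with t
  rw [expDivSin, mul_div_right_comm 2]
  field_simp [hs t]

lemma Phi1_eq_integral_expDivSin (c η : ℝ) (k : ℕ) :
    Phi1 c k η = 1 / 2 * ∫ t : ℝ, expDivSin η (c + t * Complex.I) * (c + t * Complex.I) ^ k := by
  simp only [Phi1, expDivSin, div_mul_eq_mul_div]

lemma F1_sub_sum_eq (q η β : ℝ) {c : ℝ} (hc : c ≠ 0) (N : ℕ) :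
    F1 q c η β - ∑ k ∈ Finset.range N, (ccoef q k : ℂ) * (β : ℂ) ^ (-(k : ℤ)) * Phi1 c k η =
      1 / 2 * ((∫ t : ℝ, expDivSin η (c + t * Complex.I) *
          ∑' k, kummerCoeff (q + 1) (q + 5 / 2) k * (2 / β * (c + t * Complex.I)) ^ k) -
        ∑ k ∈ Finset.range N, kummerCoeff (q + 1) (q + 5 / 2) k * (2 / β : ℂ) ^ k *
          ∫ t : ℝ, expDivSin η (c + t * Complex.I) * (c + t * Complex.I) ^ k) := by
  simp only [F1_eq_integral_expDivSin q η β hc, Phi1_eq_integral_expDivSin,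
    kummerM_eq_tsum_kummerCoeff, ofReal_ccoef, mul_sub, Finset.mul_sum]
  congr 1
  refine Finset.sum_congr rfl fun k _ => ?_
  rw [zpow_neg, zpow_natCast, div_pow]
  ring

theorem stmt11_general (q c η : ℝ) (hq : ∀ k : ℕ, q + 5 / 2 ≠ -k) (hc : ∀ n : ℤ, c ≠ n) (N : ℕ) :
    (fun β : ℝ => F1 q c η β -
        ∑ k ∈ Finset.range N, ((ccoef q k : ℝ) : ℂ) * (β : ℂ) ^ (-(k : ℤ)) *
          Phi1 c k η) =O[atTop]
      (fun β : ℝ => β ^ (-(N : ℝ))) := by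
  obtain ⟨R, hcoeff⟩ := exists_hasExpType_kummerCoeff ((q : ℂ) + 1) (b := (q : ℂ) + 5 / 2)
    fun k h => hq k (by simpa using congrArg Complex.re h)
  have hlim : Tendsto (fun β : ℝ => (2 / β : ℂ)) atTop (𝓝 0) := by
    have : Tendsto (fun β : ℝ => 2 / β) atTop (𝓝 0) := tendsto_const_nhds.div_atTop tendsto_id
    exact_mod_cast (Complex.continuous_ofReal.tendsto 0).comp this
  have hline : Measurable fun t : ℝ => (c : ℂ) + t * Complex.I := by fun_prop
  have hexpansion := (hcoeff.isBigO_integral_mul_tsum_sub_sum_range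
    ((measurable_expDivSin η).comp hline).aestronglyMeasurable hline.aestronglyMeasurable one_pos
    (integrable_exp_norm_mul_norm_expDivSin hc η zero_le_one
      (by linarith [Real.pi_gt_three])) N).comp_tendsto hlim
  simp only [F1_sub_sum_eq q η _ (by exact_mod_cast hc 0) N]
  refine (hexpansion.const_mul_left _).trans (.of_bound (2 ^ N) ?_)
  filter_upwards [eventually_gt_atTop 0] with β hβ
  simp [Real.rpow_neg hβ.le, abs_of_pos hβ, div_eq_mul_inv, mul_pow]

theorem stmt11 (q c η : ℝ) (hq : 0 ≤ q) (hhalf : ∀ k : ℕ, q ≠ (k : ℝ) + 1 / 2)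
    (hc0 : 0 < c) (hc1 : c < 1) :
    ∀ N : ℕ, 1 ≤ N →
      (fun β : ℝ => F1 q c η β -
          ∑ k ∈ Finset.range N, ((ccoef q k : ℝ) : ℂ) * (β : ℂ) ^ (-(k : ℤ)) *
            Phi1 c k η) =O[atTop]
        (fun β : ℝ => β ^ (-(N : ℝ))) :=
  fun N _ => stmt11_general q c η (fun k => by linarith [k.cast_nonneg (α := ℝ)])
    (by rintro n rfl; norm_cast at hc0 hc1; lia) N
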